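/- Let M_1, M_2, M_3 be the 3×3 integer matrices (indexed by {0,1,2}) where M_k has a single entry equal to 1 at position (k−1,k−1) and all other entries 0 (i.e., M_1 has 1 at (0,0), M_2 at (1,1), M_3 at (2,2)). Then: each M_k is a permuted a-Monge matrix; for every two of these matrices there exists a permutation of {0,1,2} that is an a-Monge permutation for both; but there is no permutation of {0,1,2} that is simultaneously an a-Monge permutation for all three. (Hence the bound |U'| ≤ 3 in the reduction of a family of matrices with no common a-Monge permutation to a subfamily of size at most 3 is tight.) -/

import Mathlib

/-- A square matrix indexed by a linearly ordered type is a-Monge if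
`M i k + M j l ≥ M i l + M j k` whenever `i < j` and `k < l`. -/
def AMonge {ι : Type*} [LinearOrder ι] (M : ι → ι → ℤ) : Prop :=
  ∀ i j k l : ι, i < j → k < l → M i l + M j k ≤ M i k + M j l

/-- A matrix is a permuted a-Monge matrix if some permutation of its index set,
applied simultaneously to rows and columns, makes it a-Monge. -/
def PermAMonge {ι : Type*} [LinearOrder ι] (M : ι → ι → ℤ) : Prop :=
  ∃ π : Equiv.Perm ι, AMonge (fun i j => M (π i) (π j))

/-- `diagUnit k` is the 3×3 matrix whose only nonzero entry is a `1` at `(k,k)`. -/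
def diagUnit (k : Fin 3) : Fin 3 → Fin 3 → ℤ :=
  fun i j => if i = k ∧ j = k then 1 else 0

theorem diagUnit_apply_perm (π : Equiv.Perm (Fin 3)) (k a b : Fin 3) :
    diagUnit k (π a) (π b) = diagUnit (π.symm k) a b := by
  simp only [diagUnit, Equiv.eq_symm_apply]

theorem aMonge_diagUnit_iff (k : Fin 3) : AMonge (diagUnit k) ↔ k ≠ 1 := by
  unfold AMonge diagUnit
  decide +revert

/-- A permutation is a-Monge for `diagUnit k` exactly when it does not put `k` in the middle. -/
theorem aMonge_diagUnit_perm_iff (π : Equiv.Perm (Fin 3)) (k : Fin 3) :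
    AMonge (fun a b => diagUnit k (π a) (π b)) ↔ k ≠ π 1 := by
  simp only [diagUnit_apply_perm]
  exact (aMonge_diagUnit_iff _).trans (not_congr π.symm_apply_eq)

/-- Each of the three matrices `diagUnit 0`, `diagUnit 1`,
`diagUnit 2` is permuted a-Monge; any two of them admit a common a-Monge
permutation; but no permutation of `{0,1,2}` is an a-Monge permutation for all
three simultaneously.  Hence the bound `|U'| ≤ 3` is tight. -/
theorem tightness_of_three_matrices_bound :
    (∀ k : Fin 3, PermAMonge (diagUnit k)) ∧
    (∀ k l : Fin 3, ∃ π : Equiv.Perm (Fin 3),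
        AMonge (fun a b => diagUnit k (π a) (π b)) ∧
        AMonge (fun a b => diagUnit l (π a) (π b))) ∧
    ¬ ∃ π : Equiv.Perm (Fin 3),
        ∀ k : Fin 3, AMonge (fun a b => diagUnit k (π a) (π b)) := by
  simp only [PermAMonge, aMonge_diagUnit_perm_iff]
  have avoid_two (k l : Fin 3) : ∃ π : Equiv.Perm (Fin 3), k ≠ π 1 ∧ l ≠ π 1 := by
    obtain ⟨m, hk, hl⟩ : ∃ m : Fin 3, k ≠ m ∧ l ≠ m := by decide +revert
    exact ⟨Equiv.swap 1 m, by simpa using hk, by simpa using hl⟩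
  exact ⟨fun k => (avoid_two k k).imp fun _ h => h.1, avoid_two,
    fun ⟨π, h⟩ => h (π 1) rfl⟩
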